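/- arXiv:2303.06090 — 7 statements merged into one kernel-verified Lean document; each statement's English description precedes it below -/
import Mathlib

section
/- Let G be a simple graph on a finite vertex type V and let ≺ be a linear order on V. The number of ordered 4-cycles of G equals 8 times the number of quadruples (v, u, y, u') of vertices satisfying u ≺ u', u' ≺ v, y ≺ v, G.Adj v u, G.Adj u y, G.Adj y u', and G.Adj u' v. (That is, every distinct 4-cycle has a unique canonical representation (v, u, y, u') with v the ≺-largest vertex, y the vertex antipodal to v, and u ≺ u' the two remaining vertices.) -/
/-!
The dihedral group of order 8 acts freely on ordered 4-cycles, and the canonical representations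
are chosen by three successive binary choices. Each choice is resolved by an involution, so each
halves the count (`card_filter_eq_two_mul`):

* `(a, b, c, d) ↦ (c, b, a, d)` selects `c < a`;
* `(a, b, c, d) ↦ (a, d, c, b)` preserves `c < a` and selects `b < d`;
* `(a, b, c, d) ↦ (d, c, b, a)` preserves `c < a` and `b < d` together, as it exchanges them, and
  selects `d < a`, where `a ≠ d` because the two are adjacent.

What survives is `b < d < a` and `c < a`, that is, a canonical quadruple.
-/

open Finset

/-- If an involution `σ` of `P` toggles `Q`, then exactly half of `P` satisfies `Q`. -/
theorem card_filter_eq_two_mul {α : Type*} [Fintype α] (P Q : α → Prop)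
    [DecidablePred P] [DecidablePred Q] (σ : α → α) (hσ : ∀ q, σ (σ q) = q)
    (hP : ∀ q, P q → P (σ q)) (hQ : ∀ q, P q → (Q (σ q) ↔ ¬ Q q)) :
    (univ.filter P).card = 2 * (univ.filter (fun q => P q ∧ Q q)).card := by
  have h : (univ.filter (fun q => P q ∧ ¬ Q q)).card =
      (univ.filter (fun q => P q ∧ Q q)).card := by
    refine card_nbij' σ σ ?_ ?_ (fun q _ => hσ q) (fun q _ => hσ q)
    · intro q hq
      simp only [coe_filter, mem_univ, true_and, Set.mem_ofPred_eq] at hq ⊢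
      exact ⟨hP q hq.1, (hQ q hq.1).2 hq.2⟩
    · intro q hq
      simp only [coe_filter, mem_univ, true_and, Set.mem_ofPred_eq] at hq ⊢
      exact ⟨hP q hq.1, fun h => (hQ q hq.1).1 h hq.2⟩
  rw [← card_filter_add_card_filter_not (s := univ.filter P) Q, filter_filter, filter_filter, h,
    two_mul]

/-- Counting 4-cycles: the number of ordered 4-cycles equals 8 times the number of
canonical representations `(v, u, y, u')` with `u ≺ u' ≺ v` and `y ≺ v`. -/
theorem orderedC4_eq_eight_mul_canonical {V : Type*} [Fintype V] [LinearOrder V]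
    (G : SimpleGraph V) [DecidableRel G.Adj] :
    (univ.filter (fun q : V × V × V × V =>
      G.Adj q.1 q.2.1 ∧ G.Adj q.2.1 q.2.2.1 ∧ G.Adj q.2.2.1 q.2.2.2 ∧
      G.Adj q.2.2.2 q.1 ∧ q.1 ≠ q.2.2.1 ∧ q.2.1 ≠ q.2.2.2)).card =
    8 * (univ.filter (fun q : V × V × V × V =>
      q.2.1 < q.2.2.2 ∧ q.2.2.2 < q.1 ∧ q.2.2.1 < q.1 ∧
      G.Adj q.1 q.2.1 ∧ G.Adj q.2.1 q.2.2.1 ∧ G.Adj q.2.2.1 q.2.2.2 ∧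
      G.Adj q.2.2.2 q.1)).card := by
  have toggle : ∀ x y : V, x ≠ y → (x < y ↔ ¬ y < x) := fun x y h =>
    ⟨fun h' => h'.not_gt, fun h' => lt_of_le_of_ne (not_lt.1 h') h⟩
  rw [card_filter_eq_two_mul _ (fun q : V × V × V × V => q.2.2.1 < q.1)
      (fun q => (q.2.2.1, q.2.1, q.1, q.2.2.2)) (fun _ => rfl)
      (fun q ⟨h1, h2, h3, h4, h5, h6⟩ => ⟨h2.symm, h1.symm, h4.symm, h3.symm, h5.symm, h6⟩)
      (fun q h => toggle _ _ h.2.2.2.2.1),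
    card_filter_eq_two_mul _ (fun q : V × V × V × V => q.2.1 < q.2.2.2)
      (fun q => (q.1, q.2.2.2, q.2.2.1, q.2.1)) (fun _ => rfl)
      (fun q ⟨⟨h1, h2, h3, h4, h5, h6⟩, h7⟩ =>
        ⟨⟨h4.symm, h3.symm, h2.symm, h1.symm, h5, h6.symm⟩, h7⟩)
      (fun q h => toggle _ _ h.1.2.2.2.2.2.symm),
    card_filter_eq_two_mul _ (fun q : V × V × V × V => q.2.2.2 < q.1)
      (fun q => (q.2.2.2, q.2.2.1, q.2.1, q.1)) (fun _ => rfl)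
      (fun q ⟨⟨⟨h1, h2, h3, h4, h5, h6⟩, h7⟩, h8⟩ =>
        ⟨⟨⟨h3.symm, h2.symm, h1.symm, h4.symm, h6.symm, h5.symm⟩, h8⟩, h7⟩)
      (fun q h => toggle _ _ h.1.1.2.2.2.1.ne.symm),
    ← mul_assoc, ← mul_assoc]
  congr 2
  ext q
  simp only [mem_filter, mem_univ, true_and]
  constructor
  · rintro ⟨⟨⟨⟨h1, h2, h3, h4, -, -⟩, h7⟩, h8⟩, h9⟩
    exact ⟨h8, h9, h7, h1, h2, h3, h4⟩
  · rintro ⟨h8, h9, h7, h1, h2, h3, h4⟩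
    exact ⟨⟨⟨⟨h1, h2, h3, h4, h7.ne', h8.ne⟩, h7⟩, h8⟩, h9⟩
end

section
/- Let G be a simple graph on a finite vertex type V and let ≺ be a linear order on V. The number of ordered 4-cycles of G equals 8 · Σ over pairs (v,y) with y ≺ v of (|S(v,y)| choose 2), where S(v,y) = {u ∈ V : u ≺ v ∧ G.Adj v u ∧ G.Adj y u}. -/
/-!
In a 4-cycle all four vertices are distinct, so exactly one of the four cyclic rotations of an
ordered 4-cycle puts its `≺`-largest vertex first. Hence the number of ordered 4-cycles is four times
the number of those whose first vertex is the largest (`card_eq_four_mul_peaked`). Once the largest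
vertex `v` and the opposite vertex `y ≺ v` are fixed, the remaining two vertices form an arbitrary
ordered pair of distinct elements of `S(v, y)`, giving `2 · C(|S(v, y)|, 2)` choices
(`card_peaked`).
-/

open Finset

/-- `S G v y` is the set of vertices `u` with `u ≺ v`, `G.Adj v u` and `G.Adj y u`. -/
def S {V : Type*} [Fintype V] [LinearOrder V] (G : SimpleGraph V) [DecidableRel G.Adj]
    (v y : V) : Finset V :=
  univ.filter (fun u => u < v ∧ G.Adj v u ∧ G.Adj y u)

/-- `(a, b, c, d)` is an ordered 4-cycle of `G`. -/
def IsC4 {V : Type*} (G : SimpleGraph V) (q : V × V × V × V) : Prop :=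
  G.Adj q.1 q.2.1 ∧ G.Adj q.2.1 q.2.2.1 ∧ G.Adj q.2.2.1 q.2.2.2 ∧
    G.Adj q.2.2.2 q.1 ∧ q.1 ≠ q.2.2.1 ∧ q.2.1 ≠ q.2.2.2

/-- `(a, b, c, d)` is an ordered 4-cycle of `G` whose first vertex is its largest one. -/
def IsPeaked {V : Type*} [LinearOrder V] (G : SimpleGraph V) (q : V × V × V × V) : Prop :=
  IsC4 G q ∧ q.2.1 < q.1 ∧ q.2.2.1 < q.1 ∧ q.2.2.2 < q.1

/-- The cyclic rotation `(a, b, c, d) ↦ (b, c, d, a)`. -/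
def rotate (V : Type*) : V × V × V × V ≃ V × V × V × V where
  toFun q := (q.2.1, q.2.2.1, q.2.2.2, q.1)
  invFun q := (q.2.2.2, q.1, q.2.1, q.2.2.1)
  left_inv _ := rfl
  right_inv _ := rfl

theorem isC4_rotate {V : Type*} (G : SimpleGraph V) (q : V × V × V × V) :
    IsC4 G (rotate V q) ↔ IsC4 G q := by
  simp only [IsC4, rotate, Equiv.coe_fn_mk]
  constructor <;> rintro ⟨h1, h2, h3, h4, h5, h6⟩
  · exact ⟨h4, h1, h2, h3, h6.symm, h5⟩
  · exact ⟨h2, h3, h4, h1, h6, h5.symm⟩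

open Classical in
/-- Exactly one rotation of an ordered 4-cycle is peaked, and no rotation of anything else is. -/
theorem indicator_eq_sum_rotations {V : Type*} [LinearOrder V] (G : SimpleGraph V)
    (q : V × V × V × V) :
    (if IsC4 G q then 1 else 0 : ℕ) =
      (if IsPeaked G q then 1 else 0) + (if IsPeaked G (rotate V q) then 1 else 0) +
      (if IsPeaked G (rotate V (rotate V q)) then 1 else 0) +
      (if IsPeaked G (rotate V (rotate V (rotate V q))) then 1 else 0) := by
  simp only [IsPeaked, isC4_rotate]
  by_cases h : IsC4 G q
  · obtain ⟨a, b, c, d⟩ := q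
    have hab : a ≠ b := h.1.ne
    have hbc : b ≠ c := h.2.1.ne
    have hcd : c ≠ d := h.2.2.1.ne
    have hda : d ≠ a := h.2.2.2.1.ne
    have hac : a ≠ c := h.2.2.2.2.1
    have hbd : b ≠ d := h.2.2.2.2.2
    simp only [h, rotate, Equiv.coe_fn_mk, true_and, if_true]
    clear h
    grind (splits := 25)
  · simp [h]

open Classical in
theorem card_eq_four_mul_peaked {V : Type*} [Fintype V] [LinearOrder V] (G : SimpleGraph V) :
    (univ.filter (IsC4 G)).card = 4 * (univ.filter (IsPeaked G)).card := by
  have key (f : V × V × V × V → ℕ) : ∑ q, f (rotate V q) = ∑ q, f q :=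
    Equiv.sum_comp (rotate V) f
  simp only [card_filter, indicator_eq_sum_rotations, sum_add_distrib]
  rw [key (fun q => if IsPeaked G (rotate V (rotate V q)) then 1 else 0),
    key (fun q => if IsPeaked G (rotate V q) then 1 else 0),
    key (fun q => if IsPeaked G q then 1 else 0)]
  ring

theorem card_offDiag_eq_two_mul_choose {α : Type*} [DecidableEq α] (s : Finset α) :
    s.offDiag.card = 2 * s.card.choose 2 := by
  rw [offDiag_card, Nat.choose_two_right, Nat.mul_div_cancel' (Nat.even_mul_pred_self _).two_dvd,
    Nat.mul_sub_one]

open Classical in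
theorem card_peaked {V : Type*} [Fintype V] [LinearOrder V] (G : SimpleGraph V)
    [DecidableRel G.Adj] :
    (univ.filter (IsPeaked G)).card =
      ∑ p ∈ univ.filter (fun p : V × V => p.2 < p.1), 2 * (S G p.1 p.2).card.choose 2 := by
  simp only [← card_offDiag_eq_two_mul_choose]
  rw [← card_sigma]
  refine card_bij' (fun q _ => ⟨(q.1, q.2.2.1), (q.2.1, q.2.2.2)⟩)
    (fun x _ => (x.1.1, x.2.1, x.1.2, x.2.2)) ?_ ?_ (fun _ _ => rfl) (fun _ _ => rfl)
  · rintro ⟨a, b, c, d⟩ h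
    simp only [mem_filter, mem_univ, true_and, IsPeaked, IsC4] at h
    simp only [mem_sigma, mem_filter, mem_univ, true_and, mem_offDiag, S]
    obtain ⟨⟨h1, h2, h3, h4, h5, h6⟩, h7, h8, h9⟩ := h
    exact ⟨h8, ⟨h7, h1, h2.symm⟩, ⟨h9, h4.symm, h3⟩, h6⟩
  · rintro ⟨⟨a, c⟩, ⟨b, d⟩⟩ h
    simp only [mem_sigma, mem_filter, mem_univ, true_and, mem_offDiag, S] at h
    simp only [mem_filter, mem_univ, true_and, IsPeaked, IsC4]
    obtain ⟨h8, ⟨h7, h1, h2⟩, ⟨h9, h4, h3⟩, h6⟩ := h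
    exact ⟨⟨h1, h2.symm, h3, h4.symm, h8.ne', h6⟩, h7, h8, h9⟩

/-- The number of ordered 4-cycles equals `8 · Σ_{(v,y) : y ≺ v} C(|S(v,y)|, 2)`. -/
theorem orderedC4_eq_eight_mul_sum_choose {V : Type*} [Fintype V] [LinearOrder V]
    (G : SimpleGraph V) [DecidableRel G.Adj] :
    (univ.filter (fun q : V × V × V × V =>
      G.Adj q.1 q.2.1 ∧ G.Adj q.2.1 q.2.2.1 ∧ G.Adj q.2.2.1 q.2.2.2 ∧
      G.Adj q.2.2.2 q.1 ∧ q.1 ≠ q.2.2.1 ∧ q.2.1 ≠ q.2.2.2)).card =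
    8 * ∑ p ∈ univ.filter (fun p : V × V => p.2 < p.1),
        (S G p.1 p.2).card.choose 2 := by
  classical
  have h := card_eq_four_mul_peaked G
  rw [card_peaked, ← mul_sum, ← mul_assoc, show 4 * 2 = 8 from rfl] at h
  convert h using 2
  ext q
  simp only [mem_filter, IsC4]
end

section
/- Let G be a simple graph on a finite vertex type V, let ≺ be a linear order on V, and let x ∈ V. Then the number of ordered 4-cycles of G containing x equals 8 · [ Σ over y with y ≺ x of (|S(x,y)| choose 2) + Σ over v with x ≺ v of (|S(v,x)| choose 2) + Σ over pairs (v,y) with y ≺ v and x ∈ S(v,y) of (|S(v,y)| − 1) ]. (The three sums count, respectively, the 4-cycles in which x is the ≺-largest vertex, those in which x is antipodal to the ≺-largest vertex, and those in which x is adjacent to the ≺-largest vertex on the cycle.) -/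
/-! The vertices of a 4-cycle are pairwise distinct, so exactly one of the four positions of an
ordered 4-cycle holds its largest vertex. Rotation permutes the positions and preserves both being
a 4-cycle and containing `x`, so the count is 4 times the number of ordered 4-cycles
`(v, b, y, d)` through `x` with largest vertex `v` (`card_eq_four_mul`). Such a quadruple is a pair
`y < v` together with an ordered pair of distinct elements `b, d` of `S G v y`. The cases `x = v`
and `x = y` give `|S| (|S| - 1) = 2 * (|S| choose 2)` for each value of the remaining vertex, and
each of the cases `x = b`, `x = d` leaves `|S| - 1` choices for the other middle vertex. -/

open Finset

/-- Rotation of a quadruple by one position. -/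
def rotQuad (V : Type*) : V × V × V × V ≃ V × V × V × V where
  toFun q := (q.2.1, q.2.2.1, q.2.2.2, q.1)
  invFun q := (q.2.2.2, q.1, q.2.1, q.2.2.1)
  left_inv _ := rfl
  right_inv _ := rfl

/-- The quadruples `(v, b, y, d)` with `y < v` and `b ≠ d` both in `S G v y`; these are exactly the
ordered 4-cycles whose first vertex is the largest one. -/
def TopFirst {V : Type*} [Fintype V] [LinearOrder V] (G : SimpleGraph V) [DecidableRel G.Adj]
    (q : V × V × V × V) : Prop :=
  q.2.2.1 < q.1 ∧ q.2.1 ∈ S G q.1 q.2.2.1 ∧ q.2.2.2 ∈ S G q.1 q.2.2.1 ∧ q.2.1 ≠ q.2.2.2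

instance {V : Type*} [Fintype V] [LinearOrder V] (G : SimpleGraph V) [DecidableRel G.Adj] :
    DecidablePred (TopFirst G) :=
  fun _ => inferInstanceAs (Decidable (_ ∧ _))

theorem topFirst_iff {V : Type*} [Fintype V] [LinearOrder V] (G : SimpleGraph V)
    [DecidableRel G.Adj] (a b c d : V) :
    TopFirst G (a, b, c, d) ↔ c < a ∧ b ∈ S G a c ∧ d ∈ S G a c ∧ b ≠ d :=
  Iff.rfl

/-- If exactly one of the four rotations of each solution of the rotation-invariant predicate `P`
satisfies `Q`, then `P` has four times as many solutions as `P ∧ Q`. -/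
theorem card_eq_four_mul {V : Type*} [Fintype V]
    (P Q : V × V × V × V → Prop) [DecidablePred P] [DecidablePred Q]
    (hP : ∀ q, P (rotQuad V q) ↔ P q)
    (hQ : ∀ q, P q → (if Q q then 1 else 0) + (if Q (rotQuad V q) then 1 else 0) +
      (if Q (rotQuad V (rotQuad V q)) then 1 else 0) +
      (if Q (rotQuad V (rotQuad V (rotQuad V q))) then 1 else 0) = 1) :
    (univ.filter P).card = 4 * (univ.filter (fun q => P q ∧ Q q)).card := by
  have key : ∀ e : V × V × V × V ≃ V × V × V × V, (∀ q, P (e q) ↔ P q) →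
      ∑ q ∈ univ.filter P, (if Q (e q) then 1 else 0) =
        (univ.filter (fun q => P q ∧ Q q)).card := by
    intro e he
    rw [← Finset.card_filter, Finset.filter_filter]
    refine Finset.card_equiv e fun q => ?_
    simp [he]
  have h1 : ∑ q ∈ univ.filter P, (if Q q then 1 else 0) = _ :=
    key (Equiv.refl _) (fun _ => Iff.rfl)
  have h2 : ∑ q ∈ univ.filter P, (if Q (rotQuad V q) then 1 else 0) = _ :=
    key (rotQuad V) hP
  have h3 : ∑ q ∈ univ.filter P, (if Q (rotQuad V (rotQuad V q)) then 1 else 0) = _ :=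
    key ((rotQuad V).trans (rotQuad V)) (fun q => by simp [hP])
  have h4 : ∑ q ∈ univ.filter P,
      (if Q (rotQuad V (rotQuad V (rotQuad V q))) then 1 else 0) = _ :=
    key (((rotQuad V).trans (rotQuad V)).trans (rotQuad V)) (fun q => by simp [hP])
  rw [Finset.card_eq_sum_ones, ← Finset.sum_congr rfl (fun q hq => hQ q (mem_filter.1 hq).2)]
  simp only [Finset.sum_add_distrib]
  omega

theorem offDiag_card_eq_choose {V : Type*} [DecidableEq V] (s : Finset V) :
    s.offDiag.card = 2 * s.card.choose 2 := by
  rw [Finset.offDiag_card, Nat.choose_two_right,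
    Nat.mul_div_cancel' (Nat.even_mul_pred_self _).two_dvd,
    Nat.mul_sub_one]

section Counts

variable {V : Type*} [Fintype V] [LinearOrder V] (G : SimpleGraph V) [DecidableRel G.Adj] (x : V)

theorem card_top :
    (univ.filter (fun q => TopFirst G q ∧ x = q.1)).card =
      2 * ∑ y ∈ univ.filter (fun y => y < x), (S G x y).card.choose 2 := by
  rw [Finset.mul_sum]
  simp_rw [← offDiag_card_eq_choose]
  rw [← Finset.card_sigma]
  refine Finset.card_bij' (fun q _ => ⟨q.2.2.1, q.2.1, q.2.2.2⟩)
    (fun s _ => (x, s.2.1, s.1, s.2.2)) ?_ ?_ ?_ ?_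
  · rintro ⟨a, b, c, d⟩ h
    simp only [topFirst_iff, mem_filter, mem_univ, true_and] at h
    obtain ⟨h, rfl⟩ := h
    simpa [mem_offDiag] using h
  · rintro ⟨c, b, d⟩ h
    simpa [topFirst_iff, mem_offDiag] using h
  · rintro ⟨a, b, c, d⟩ h
    simp only [mem_filter] at h
    simp [h.2.2]
  · rintro ⟨c, b, d⟩ h
    rfl

theorem card_antipodal :
    (univ.filter (fun q => TopFirst G q ∧ x = q.2.2.1)).card =
      2 * ∑ v ∈ univ.filter (fun v => x < v), (S G v x).card.choose 2 := by
  rw [Finset.mul_sum]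
  simp_rw [← offDiag_card_eq_choose]
  rw [← Finset.card_sigma]
  refine Finset.card_bij' (fun q _ => ⟨q.1, q.2.1, q.2.2.2⟩)
    (fun s _ => (s.1, s.2.1, x, s.2.2)) ?_ ?_ ?_ ?_
  · rintro ⟨a, b, c, d⟩ h
    simp only [topFirst_iff, mem_filter, mem_univ, true_and] at h
    obtain ⟨h, rfl⟩ := h
    simpa [mem_offDiag] using h
  · rintro ⟨c, b, d⟩ h
    simpa [topFirst_iff, mem_offDiag] using h
  · rintro ⟨a, b, c, d⟩ h
    simp only [mem_filter] at h
    simp [h.2.2]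
  · rintro ⟨c, b, d⟩ h
    rfl

theorem card_second :
    (univ.filter (fun q => TopFirst G q ∧ x = q.2.1)).card =
      ∑ p ∈ univ.filter (fun p : V × V => p.2 < p.1 ∧ x ∈ S G p.1 p.2),
        ((S G p.1 p.2).card - 1) := by
  rw [← Finset.sum_congr rfl
    (fun p hp => Finset.card_erase_of_mem (mem_filter.1 hp).2.2), ← Finset.card_sigma]
  refine Finset.card_bij' (fun q _ => ⟨(q.1, q.2.2.1), q.2.2.2⟩)
    (fun s _ => (s.1.1, x, s.1.2, s.2)) ?_ ?_ ?_ ?_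
  · rintro ⟨a, b, c, d⟩ h
    simp only [topFirst_iff, mem_filter, mem_univ, true_and] at h
    obtain ⟨⟨h1, h2, h3, h4⟩, rfl⟩ := h
    simp [h1, h2, h3, Ne.symm h4]
  · rintro ⟨⟨a, c⟩, d⟩ h
    simp only [mem_sigma, mem_filter, mem_univ, true_and, mem_erase] at h
    obtain ⟨⟨h1, h2⟩, h3, h4⟩ := h
    simp [topFirst_iff, h1, h2, h4, Ne.symm h3]
  · rintro ⟨a, b, c, d⟩ h
    simp only [mem_filter] at h
    simp [h.2.2]
  · rintro ⟨c, d⟩ h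
    rfl

/-- Reversing the cycle exchanges the two neighbours of the largest vertex. -/
theorem card_fourth :
    (univ.filter (fun q => TopFirst G q ∧ x = q.2.2.2)).card =
      (univ.filter (fun q => TopFirst G q ∧ x = q.2.1)).card := by
  refine Finset.card_bij' (fun q _ => (q.1, q.2.2.2, q.2.2.1, q.2.1))
    (fun q _ => (q.1, q.2.2.2, q.2.2.1, q.2.1)) ?_ ?_ (fun _ _ => rfl) (fun _ _ => rfl)
  all_goals
    rintro ⟨a, b, c, d⟩ h
    simp only [topFirst_iff, mem_filter, mem_univ, true_and] at h ⊢
    exact ⟨⟨h.1.1, h.1.2.2.1, h.1.2.1, h.1.2.2.2.symm⟩, h.2⟩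

/-- The four possible positions of `x` are mutually exclusive. -/
theorem card_topFirst_mem :
    (univ.filter (fun q : V × V × V × V => TopFirst G q ∧
      (x = q.1 ∨ x = q.2.1 ∨ x = q.2.2.1 ∨ x = q.2.2.2))).card =
    (univ.filter (fun q => TopFirst G q ∧ x = q.1)).card +
    (univ.filter (fun q => TopFirst G q ∧ x = q.2.1)).card +
    (univ.filter (fun q => TopFirst G q ∧ x = q.2.2.1)).card +
    (univ.filter (fun q => TopFirst G q ∧ x = q.2.2.2)).card := by
  simp only [Finset.card_filter, ← Finset.sum_add_distrib]
  refine Finset.sum_congr rfl ?_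
  rintro ⟨a, b, c, d⟩ -
  by_cases h : TopFirst G (a, b, c, d)
  · have h' := h
    simp only [topFirst_iff, S, mem_filter, mem_univ, true_and] at h'
    obtain ⟨h1, ⟨h2, -, h3⟩, ⟨h4, -, h5⟩, h6⟩ := h'
    have h3 := h3.ne
    have h5 := h5.ne
    simp only [h, true_and]
    grind
  · simp [h]

end Counts

/-- Vertex-local 4-cycle counting: the number of ordered 4-cycles containing a vertex `x`
splits (up to the factor 8) into the cycles where `x` is the `≺`-largest vertex, the
cycles where `x` is antipodal to the `≺`-largest vertex, and the cycles where `x` is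
adjacent to the `≺`-largest vertex. -/
theorem vertex_local_c4_count {V : Type*} [Fintype V] [LinearOrder V]
    (G : SimpleGraph V) [DecidableRel G.Adj] (x : V) :
    (univ.filter (fun q : V × V × V × V =>
      (G.Adj q.1 q.2.1 ∧ G.Adj q.2.1 q.2.2.1 ∧ G.Adj q.2.2.1 q.2.2.2 ∧
        G.Adj q.2.2.2 q.1 ∧ q.1 ≠ q.2.2.1 ∧ q.2.1 ≠ q.2.2.2) ∧
      (x = q.1 ∨ x = q.2.1 ∨ x = q.2.2.1 ∨ x = q.2.2.2))).card =
    8 * (∑ y ∈ univ.filter (fun y => y < x), (S G x y).card.choose 2 +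
      ∑ v ∈ univ.filter (fun v => x < v), (S G v x).card.choose 2 +
      ∑ p ∈ univ.filter (fun p : V × V => p.2 < p.1 ∧ x ∈ S G p.1 p.2),
        ((S G p.1 p.2).card - 1)) := by
  have hM := card_topFirst_mem G x
  rw [card_fourth, card_second, card_top, card_antipodal] at hM
  rw [card_eq_four_mul _ (TopFirst G)]
  · have : (univ.filter (fun q : V × V × V × V =>
        ((G.Adj q.1 q.2.1 ∧ G.Adj q.2.1 q.2.2.1 ∧ G.Adj q.2.2.1 q.2.2.2 ∧
          G.Adj q.2.2.2 q.1 ∧ q.1 ≠ q.2.2.1 ∧ q.2.1 ≠ q.2.2.2) ∧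
        (x = q.1 ∨ x = q.2.1 ∨ x = q.2.2.1 ∨ x = q.2.2.2)) ∧ TopFirst G q)) =
        univ.filter (fun q : V × V × V × V => TopFirst G q ∧
          (x = q.1 ∨ x = q.2.1 ∨ x = q.2.2.1 ∨ x = q.2.2.2)) := by
      refine Finset.filter_congr ?_
      rintro ⟨a, b, c, d⟩ -
      refine ⟨fun h => ⟨h.2, h.1.2⟩, fun h => ⟨⟨?_, h.2⟩, h.1⟩⟩
      have h' := h.1
      simp only [topFirst_iff, S, mem_filter, mem_univ, true_and] at h'
      obtain ⟨h1, ⟨-, h2, h3⟩, ⟨-, h4, h5⟩, h6⟩ := h'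
      exact ⟨h2, h3.symm, h5, h4.symm, h1.ne', h6⟩
    rw [this, hM]
    ring
  · rintro ⟨a, b, c, d⟩
    simp only [rotQuad, Equiv.coe_fn_mk]
    have := @ne_comm V a c
    tauto
  · rintro ⟨a, b, c, d⟩ ⟨⟨h1, h2, h3, h4, h5, h6⟩, -⟩
    have n1 := h1.ne
    have n2 := h2.ne
    have n3 := h3.ne
    have n4 := h4.ne
    clear hM
    dsimp only at *
    simp only [rotQuad, Equiv.coe_fn_mk, topFirst_iff, S, mem_filter, mem_univ, true_and,
      h1, h2, h3, h4, h1.symm, h2.symm, h3.symm, h4.symm, and_true]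
    -- Only the order comparisons are left: exactly one of four distinct vertices is the largest.
    clear h1 h2 h3 h4
    grind (splits := 25)
end

section
/- Let G be a simple graph on a finite vertex type V, let ≺ be a linear order on V, and let a, b be adjacent vertices of G with a ≺ b. Then the number of ordered 4-cycles of G containing the edge {a,b} equals 8 · [ Σ over y with y ≺ b and a ∈ S(b,y) of (|S(b,y)| − 1) + Σ over v with b ≺ v and a ∈ S(v,b) of (|S(v,b)| − 1) + Σ over v with a ≺ v and b ∈ S(v,a) of (|S(v,a)| − 1) ]. (The three sums count, respectively, the 4-cycles in which b is the ≺-largest vertex, those in which b is antipodal to the ≺-largest vertex, and those in which a is antipodal to the ≺-largest vertex.) -/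
/-!
A 4-cycle through the edge `{a, b}` has a unique name `a - b - c - d`, so it is recorded by the
pair `(c, d)` of its other two vertices (`completions`). Each such pair gives eight ordered
4-cycles, by four choices of the starting vertex and two of the direction (`arrange`,
`card_ordered_eq`).

As `a ≺ b`, the largest vertex of the cycle is `b`, `d` or `c`. In each case let `v` be the largest
vertex and `y` its antipode: the other two vertices of the cycle are distinct elements of `S(v, y)`,
one of them being a prescribed endpoint `x` of the edge. Conversely, every other element of
`S(v, y)` closes the path `v - x - y` to a 4-cycle. So the cycles with given `v` and `y` number
`|S(v, y)| - 1`, and summing over the vertex of the pair `{v, y}` that is not on the edge gives the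
three sums (`card_completions`).
-/

open Finset

/-- The pairs `(c, d)` for which `a - b - c - d` is a 4-cycle, given that `a` and `b` are
adjacent. -/
def completions {V : Type*} [Fintype V] [LinearOrder V] (G : SimpleGraph V) [DecidableRel G.Adj]
    (a b : V) : Finset (V × V) :=
  univ.filter (fun p => G.Adj b p.1 ∧ G.Adj p.1 p.2 ∧ G.Adj p.2 a ∧ a ≠ p.1 ∧ b ≠ p.2)

/-- The eight ways of writing the 4-cycle `a - b - c - d` as a quadruple: the rotations of
`(a, b, c, d)` and those of its reversal. -/
def arrange {V : Type*} (a b : V) : Fin 8 × V × V → V × V × V × V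
  | (0, c, d) => (a, b, c, d)
  | (1, c, d) => (d, a, b, c)
  | (2, c, d) => (c, d, a, b)
  | (3, c, d) => (b, c, d, a)
  | (4, c, d) => (b, a, d, c)
  | (5, c, d) => (c, b, a, d)
  | (6, c, d) => (d, c, b, a)
  | (7, c, d) => (a, d, c, b)

theorem card_ordered_eq {V : Type*} [Fintype V] [LinearOrder V]
    (G : SimpleGraph V) [DecidableRel G.Adj] (a b : V) (hab : G.Adj a b) :
    (univ.filter (fun q : V × V × V × V =>
      (G.Adj q.1 q.2.1 ∧ G.Adj q.2.1 q.2.2.1 ∧ G.Adj q.2.2.1 q.2.2.2 ∧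
        G.Adj q.2.2.2 q.1 ∧ q.1 ≠ q.2.2.1 ∧ q.2.1 ≠ q.2.2.2) ∧
      (s(a, b) = s(q.1, q.2.1) ∨ s(a, b) = s(q.2.1, q.2.2.1) ∨
        s(a, b) = s(q.2.2.1, q.2.2.2) ∨ s(a, b) = s(q.2.2.2, q.1)))).card =
    8 * (completions G a b).card := by
  have hne : a ≠ b := hab.ne
  have h8 : 8 * (completions G a b).card =
      ((univ : Finset (Fin 8)) ×ˢ completions G a b).card := by
    rw [card_product, card_univ, Fintype.card_fin]
  rw [h8]
  symm
  refine card_nbij (arrange a b) ?_ ?_ ?_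
  · rintro ⟨i, c, d⟩ h
    simp only [completions, mem_product, mem_univ, mem_filter, true_and, mem_coe] at h ⊢
    obtain ⟨h1, h2, h3, h4, h5⟩ := h
    fin_cases i <;> simp [arrange, hab, hab.symm, h1, h1.symm, h2, h2.symm, h3, h3.symm, h4,
      h4.symm, h5, h5.symm]
  · rintro ⟨i, c, d⟩ h ⟨j, c', d'⟩ h' e
    simp only [completions, coe_product, coe_univ, Set.mem_prod, Set.mem_univ, mem_coe, mem_filter,
      mem_univ, true_and] at h h'
    obtain ⟨h1, h2, h3, h4, h5⟩ := h
    obtain ⟨h1', h2', h3', h4', h5'⟩ := h'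
    have := h1.ne
    have := h3.ne
    have := h1'.ne
    have := h3'.ne
    fin_cases i <;> fin_cases j <;> simp [arrange] at e ⊢ <;> grind
  · rintro ⟨w, x, y, z⟩ h
    simp only [coe_filter, mem_univ, true_and, Set.mem_ofPred_eq, Sym2.eq_iff] at h
    obtain ⟨⟨h1, h2, h3, h4, h5, h6⟩, h7⟩ := h
    simp only [Set.mem_image, mem_coe, mem_product, mem_univ, true_and, completions, mem_filter]
    rcases h7 with (⟨rfl, rfl⟩ | ⟨rfl, rfl⟩) | (⟨rfl, rfl⟩ | ⟨rfl, rfl⟩) |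
      (⟨rfl, rfl⟩ | ⟨rfl, rfl⟩) | (⟨rfl, rfl⟩ | ⟨rfl, rfl⟩)
    · exact ⟨(0, y, z), ⟨h2, h3, h4, h5, h6⟩, rfl⟩
    · exact ⟨(4, z, y), ⟨h4.symm, h3.symm, h2.symm, h6, h5⟩, rfl⟩
    · exact ⟨(1, z, w), ⟨h3, h4, h1, h6, h5.symm⟩, rfl⟩
    · exact ⟨(5, w, z), ⟨h1.symm, h4.symm, h3.symm, h5.symm, h6⟩, rfl⟩
    · exact ⟨(2, w, x), ⟨h4, h1, h2, h5.symm, h6.symm⟩, rfl⟩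
    · exact ⟨(6, x, w), ⟨h2.symm, h1.symm, h4.symm, h6.symm, h5.symm⟩, rfl⟩
    · exact ⟨(3, x, y), ⟨h1, h2, h3, h6.symm, h5⟩, rfl⟩
    · exact ⟨(7, y, x), ⟨h3.symm, h2.symm, h1.symm, h5, h6.symm⟩, rfl⟩

/-- A sum of terms `|F y| - 1` over indices `y` with `x ∈ F y` counts the pairs `(y, u)` with
`u ∈ F y` and `u ≠ x`; the truncated subtraction is harmless because `F y` contains `x`. -/
theorem sum_card_sub_one {V : Type*} [Fintype V] [DecidableEq V] (p : V → Prop) [DecidablePred p]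
    (F : V → Finset V) (x : V) :
    ∑ y ∈ univ.filter (fun y => p y ∧ x ∈ F y), ((F y).card - 1) =
      (univ.filter (fun q : V × V => (p q.1 ∧ x ∈ F q.1) ∧ q.2 ≠ x ∧ q.2 ∈ F q.1)).card := by
  have h : ∀ y ∈ univ.filter (fun y => p y ∧ x ∈ F y), (F y).card - 1 = ((F y).erase x).card := by
    intro y hy
    rw [card_erase_of_mem (mem_filter.mp hy).2.2]
  rw [sum_congr rfl h, ← card_sigma]
  refine card_nbij' (fun s => (s.1, s.2)) (fun q => ⟨q.1, q.2⟩) ?_ ?_ ?_ ?_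
  · rintro ⟨y, u⟩ h
    simpa [and_comm] using h
  · rintro ⟨y, u⟩ h
    simpa [and_comm] using h
  · exact fun _ _ => rfl
  · exact fun _ _ => rfl

theorem card_completions {V : Type*} [Fintype V] [LinearOrder V]
    (G : SimpleGraph V) [DecidableRel G.Adj] (a b : V) (hab : G.Adj a b) (hlt : a < b) :
    (completions G a b).card =
      ∑ y ∈ univ.filter (fun y => y < b ∧ a ∈ S G b y), ((S G b y).card - 1) +
      ∑ v ∈ univ.filter (fun v => b < v ∧ a ∈ S G v b), ((S G v b).card - 1) +
      ∑ v ∈ univ.filter (fun v => a < v ∧ b ∈ S G v a), ((S G v a).card - 1) := by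
  rw [sum_card_sub_one (fun y => y < b) (fun y => S G b y) a,
    sum_card_sub_one (fun v => b < v) (fun v => S G v b) a,
    sum_card_sub_one (fun v => a < v) (fun v => S G v a) b]
  -- In the first two sums the pairs are `(d, c)`, in the third `(c, d)`.
  rw [← card_map (Equiv.prodComm V V).toEmbedding
      (s := univ.filter (fun q : V × V => (q.1 < b ∧ a ∈ S G b q.1) ∧ q.2 ≠ a ∧ q.2 ∈ S G b q.1)),
    ← card_map (Equiv.prodComm V V).toEmbedding
      (s := univ.filter (fun q : V × V => (b < q.1 ∧ a ∈ S G q.1 b) ∧ q.2 ≠ a ∧ q.2 ∈ S G q.1 b)),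
    ← card_union_of_disjoint, ← card_union_of_disjoint]
  · congr 1
    ext ⟨c, d⟩
    have hc : G.Adj b c → b ≠ c := fun h => h.ne
    have hcd : G.Adj c d → c ≠ d := fun h => h.ne
    simp [completions, S]
    grind [SimpleGraph.adj_comm]
  · rw [disjoint_left]
    rintro ⟨c, d⟩ h h'
    simp [S] at h h'
    grind
  · rw [disjoint_left]
    rintro ⟨c, d⟩ h h'
    simp [S] at h h'
    grind

/-- Edge-local 4-cycle counting: for an edge `{a,b}` with `a ≺ b`, the number of ordered
4-cycles containing `{a,b}` splits (up to the factor 8) into the cycles where `b` is the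
`≺`-largest vertex, where `b` is antipodal to the `≺`-largest vertex, and where `a` is
antipodal to the `≺`-largest vertex. -/
theorem edge_local_c4_count {V : Type*} [Fintype V] [LinearOrder V]
    (G : SimpleGraph V) [DecidableRel G.Adj] (a b : V) (hab : G.Adj a b) (hlt : a < b) :
    (univ.filter (fun q : V × V × V × V =>
      (G.Adj q.1 q.2.1 ∧ G.Adj q.2.1 q.2.2.1 ∧ G.Adj q.2.2.1 q.2.2.2 ∧
        G.Adj q.2.2.2 q.1 ∧ q.1 ≠ q.2.2.1 ∧ q.2.1 ≠ q.2.2.2) ∧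
      (s(a, b) = s(q.1, q.2.1) ∨ s(a, b) = s(q.2.1, q.2.2.1) ∨
        s(a, b) = s(q.2.2.1, q.2.2.2) ∨ s(a, b) = s(q.2.2.2, q.1)))).card =
    8 * (∑ y ∈ univ.filter (fun y => y < b ∧ a ∈ S G b y), ((S G b y).card - 1) +
      ∑ v ∈ univ.filter (fun v => b < v ∧ a ∈ S G v b), ((S G v b).card - 1) +
      ∑ v ∈ univ.filter (fun v => a < v ∧ b ∈ S G v a), ((S G v a).card - 1)) := by
  rw [card_ordered_eq G a b hab, card_completions G a b hab hlt]
end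

section
/- Let G be a simple graph on a finite vertex type V and let ≺ be a linear order on V compatible with degrees, i.e. u ≺ v implies d(u) ≤ d(v). For each vertex v let d⁺(v) = |{u ∈ N(v) : v ≺ u}|. Then Σ over vertices v ∈ V of d⁺(v) · log(d⁺(v)) ≤ Σ over unordered edges {u,v} of G of log(min{d(u), d(v)}), where log denotes the real natural logarithm (with the convention log 0 = 0). -/
/-! Orient every edge from its smaller to its larger endpoint. By compatibility with degrees, the edge
`s(v, u)` with `v < u` contributes `log d(v)` to the right-hand side, and there are exactly `d⁺(v)`
such edges for each `v`. Grouping the edges by their smaller endpoint `Sym2.inf` therefore turns the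
right-hand side into `∑ v, d⁺(v) * log d(v)`, and `d⁺(v) ≤ d(v)` gives the inequality term by term. -/

open Finset

/-- If the linear order `≺` is compatible with degrees and `d⁺(v) = |{u ∈ N(v) : v ≺ u}|`,
then `Σ_v d⁺(v)·log d⁺(v) ≤ Σ_{uv ∈ E} log min{d(u), d(v)}`. -/
theorem sum_dplus_log_dplus_le {V : Type*} [Fintype V] [LinearOrder V]
    (G : SimpleGraph V) [DecidableRel G.Adj]
    (hcomp : ∀ u v : V, u < v → G.degree u ≤ G.degree v) :
    ∑ v : V, (((G.neighborFinset v).filter (fun u => v < u)).card : ℝ) *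
      Real.log (((G.neighborFinset v).filter (fun u => v < u)).card : ℝ) ≤
    ∑ e ∈ G.edgeFinset,
      Real.log ((Sym2.lift ⟨fun u v => min (G.degree u) (G.degree v),
        fun u v => min_comm _ _⟩ e : ℕ) : ℝ) := by
  rw [← Finset.sum_fiberwise G.edgeFinset Sym2.inf]
  refine Finset.sum_le_sum fun v _ => ?_
  have hfib : G.edgeFinset.filter (fun e => e.inf = v) =
      ((G.neighborFinset v).filter (fun u => v < u)).image (fun u => s(v, u)) := by
    ext e
    simp only [Finset.mem_filter, Finset.mem_image, SimpleGraph.mem_edgeFinset,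
      SimpleGraph.mem_neighborFinset]
    constructor
    · induction e with
      | h a b =>
        rintro ⟨hab, hv⟩
        rw [SimpleGraph.mem_edgeSet] at hab
        rw [Sym2.inf_mk] at hv
        rcases lt_or_gt_of_ne hab.ne with h | h
        · rw [inf_eq_left.2 h.le] at hv
          subst hv
          exact ⟨b, ⟨hab, h⟩, rfl⟩
        · rw [inf_eq_right.2 h.le] at hv
          subst hv
          exact ⟨a, ⟨hab.symm, h⟩, Sym2.eq_swap⟩
    · rintro ⟨u, ⟨hu, hvu⟩, rfl⟩
      exact ⟨hu, by rw [Sym2.inf_mk, inf_eq_left.2 hvu.le]⟩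
  rw [hfib, Finset.sum_image (fun a _ b _ h => Sym2.congr_right.1 h), ← nsmul_eq_mul]
  refine Finset.card_nsmul_le_sum _ _ _ fun u hu => ?_
  rw [Sym2.lift_mk]
  dsimp only
  rw [min_eq_left (hcomp v u (Finset.mem_filter.1 hu).2)]
  -- The filtered neighborhood contains `u`, so the logarithm is taken at a positive number.
  refine Real.log_le_log (by exact_mod_cast Finset.card_pos.2 ⟨u, hu⟩) ?_
  exact_mod_cast (Finset.card_filter_le _ _).trans (G.card_neighborFinset_eq_degree v).le
end

section
/- For natural numbers n and k with 3 ≤ k ≤ n, the number of pairs (v, p), where v is a vertex of the complete graph on n vertices and p is a closed walk from v to v of length k that is a cycle, equals n!/(n−k)! = k! · (n choose k). (Equivalently, the complete graph on n vertices contains exactly ((k−1)!/2) · (n choose k) distinct k-cycles, since each distinct k-cycle corresponds to exactly 2k such pairs.) -/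
/-!
A cycle of length `k` is determined by the `k` vertices it visits after its start (the last of them
being the start itself), and these are distinct. In the complete graph every injective `k`-tuple
arises in this way: it is a walk since consecutive entries differ, and the closed walk is a cycle
since its tail is a path and its length is at least three
(`SimpleGraph.Walk.isCycle_iff_isPath_tail_and_le_length`). Hence the rooted `k`-cycles are in
bijection with the embeddings `Fin k ↪ Fin n`, of which there are `n.descFactorial k`.
-/

/-- The vertices that a rooted `k`-cycle visits at times `1, …, k`, as an injective tuple. -/
def cycleTuple (n k : ℕ)
    (p : {p : Σ v : Fin n, (⊤ : SimpleGraph (Fin n)).Walk v v //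
      p.2.length = k ∧ p.2.IsCycle}) : Fin k ↪ Fin n where
  toFun i := p.1.2.getVert (i + 1)
  inj' i j hij := by
    have hi := i.isLt
    have hj := j.isLt
    have hl := p.2.1
    have := p.2.2.getVert_injOn (x₁ := i + 1) (x₂ := j + 1)
      (by simp; omega) (by simp; omega) hij
    exact Fin.ext (by omega)

theorem cycleTuple_injective (n k : ℕ) (hk : 3 ≤ k) : Function.Injective (cycleTuple n k) := by
  rintro ⟨⟨u, p⟩, hp, hpc⟩ ⟨⟨v, q⟩, hq, hqc⟩ h
  dsimp only at hp hq
  have hg : ∀ i < k, p.getVert (i + 1) = q.getVert (i + 1) := fun i hi =>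
    congrArg (fun f : Fin k ↪ Fin n => f ⟨i, hi⟩) h
  -- the entry at time `k` is the base point
  have huv : u = v := by
    have h1 := hg (k - 1) (by omega)
    rw [p.getVert_of_length_le (by omega), q.getVert_of_length_le (by omega)] at h1
    exact h1
  subst huv
  have hpq : p = q := by
    refine SimpleGraph.Walk.ext_getVert_le_length (hp.trans hq.symm) fun i hi => ?_
    cases i with
    | zero => simp
    | succ i => exact hg i (by omega)
  subst hpq
  rfl

theorem cycleTuple_surjective (n k : ℕ) (hk : 3 ≤ k) : Function.Surjective (cycleTuple n k) := by
  intro f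
  obtain ⟨m, rfl⟩ : ∃ m, k = m + 1 := ⟨k - 1, by omega⟩
  have hnd : (List.ofFn f).Nodup := List.nodup_ofFn.2 f.injective
  have hchain : (f (Fin.last m) :: List.ofFn f).IsChain (⊤ : SimpleGraph (Fin n)).Adj := by
    have h1 : (List.ofFn f).IsChain (⊤ : SimpleGraph (Fin n)).Adj :=
      (List.Pairwise.imp (fun h => by simpa using h) hnd).isChain
    rw [List.ofFn_succ] at h1 ⊢
    refine List.IsChain.cons_cons ?_ h1
    rw [SimpleGraph.top_adj]
    intro h
    have := congrArg Fin.val (f.injective h)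
    simp at this
    omega
  have hlast : (f (Fin.last m) :: List.ofFn f).getLast (List.cons_ne_nil _ _) =
      f (Fin.last m) := by
    rw [List.getLast_cons (by simp), List.getLast_ofFn]
    rfl
  let p : (⊤ : SimpleGraph (Fin n)).Walk (f (Fin.last m)) (f (Fin.last m)) :=
    (SimpleGraph.Walk.ofSupport _ (List.cons_ne_nil _ _) hchain).copy rfl hlast
  have hsupp : p.support = f (Fin.last m) :: List.ofFn f :=
    (SimpleGraph.Walk.support_copy _ _ _).trans (SimpleGraph.Walk.support_ofSupport _ hchain)
  have hlen : p.length = m + 1 := by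
    have := p.length_support
    rw [hsupp] at this
    simpa using this.symm
  have hcyc : p.IsCycle := by
    rw [SimpleGraph.Walk.isCycle_iff_isPath_tail_and_le_length]
    refine ⟨?_, by omega⟩
    rw [SimpleGraph.Walk.isPath_def, SimpleGraph.Walk.support_tail_of_not_nil _ ?_, hsupp]
    · exact hnd
    · rw [← SimpleGraph.Walk.length_eq_zero_iff]
      omega
  refine ⟨⟨⟨_, p⟩, hlen, hcyc⟩, ?_⟩
  ext i
  have hi := i.isLt
  change (p.getVert (i + 1) : ℕ) = f i
  rw [← SimpleGraph.Walk.support_getElem_eq_getVert (h := by rw [hsupp]; simp; omega)]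
  simp [hsupp, -List.ofFn_succ]

/-- For `3 ≤ k ≤ n`, the number of pairs `(v, p)` where `p` is a closed walk of length `k`
at `v` in the complete graph on `n` vertices that is a cycle equals `n!/(n-k)!`. -/
theorem card_rooted_k_cycles_complete (n k : ℕ) (hk : 3 ≤ k) (hkn : k ≤ n) :
    Nat.card {p : Σ v : Fin n, (⊤ : SimpleGraph (Fin n)).Walk v v //
      p.2.length = k ∧ p.2.IsCycle} =
    n.factorial / (n - k).factorial := by
  rw [Nat.card_eq_of_bijective (cycleTuple n k)
      ⟨cycleTuple_injective n k hk, cycleTuple_surjective n k hk⟩,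
    Nat.card_eq_fintype_card, Fintype.card_embedding_eq, Fintype.card_fin, Fintype.card_fin,
    Nat.descFactorial_eq_div hkn]
end

section
/- For natural numbers R, C ≥ 1, the number of ordered 4-cycles of the R × C grid graph (pathGraph R) □ (pathGraph C) equals 8·(R−1)·(C−1); equivalently, the grid graph contains exactly (R−1)·(C−1) distinct 4-cycles. -/
/-!
In the grid, a 4-cycle `a, b, c, d` is determined by its diagonal and its orientation: the opposite
corners `a` and `c` differ by exactly one in both coordinates, and `b`, `d` are the two remaining
corners of the unit square they span, in either order (`fourCycle_iff`; this uses `a ≠ c` and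
`b ≠ d` to exclude backtracking, and that the paths contain no 4-cycles to exclude cycles inside
one row or column). Hence ordered 4-cycles
correspond to triples of an ordered edge of the row path, an ordered edge of the column path, and
a Boolean. A path on `n` vertices has `2 * (n - 1)` ordered edges (`card_orderedEdges`), which
gives `2 * (R - 1) * (2 * (C - 1)) * 2` in total.
-/

open SimpleGraph

/-- The ordered pairs of adjacent vertices of the path on `n` vertices. -/
abbrev OrderedEdges (n : ℕ) : Type :=
  {p : Fin n × Fin n // (pathGraph n).Adj p.1 p.2}

lemma card_orderedEdges (n : ℕ) (hn : 1 ≤ n) : Nat.card (OrderedEdges n) = 2 * (n - 1) := by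
  obtain ⟨m, rfl⟩ : ∃ m, n = m + 1 := ⟨n - 1, by omega⟩
  -- The edge `{i, i + 1}` is labelled by `i : Fin m`, and the summand records its direction.
  let f : Fin m ⊕ Fin m → OrderedEdges (m + 1) := Sum.elim
    (fun i => ⟨(i.castSucc, i.succ), by simp [pathGraph_adj]⟩)
    (fun i => ⟨(i.succ, i.castSucc), by simp [pathGraph_adj]⟩)
  have hf : Function.Bijective f := by
    constructor
    · rintro (i | i) (j | j) h <;>
        simp [f, Fin.ext_iff] at h ⊢ <;> omega
    · rintro ⟨⟨x, y⟩, h⟩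
      rcases pathGraph_adj.1 h with h | h <;> dsimp only at h
      · exact ⟨Sum.inl ⟨x, by omega⟩, by simp [f, h]⟩
      · exact ⟨Sum.inr ⟨y, by omega⟩, by simp [f, h]⟩
  rw [← Nat.card_congr (Equiv.ofBijective f hf)]
  simp
  omega

/-- The ordered 4-cycles of the grid are the boundaries of unit squares: `a` and `c` are diagonally
opposite, and `b`, `d` are the other two corners. -/
lemma fourCycle_iff {R C : ℕ} (a b c d : Fin R × Fin C) :
    ((pathGraph R □ pathGraph C).Adj a b ∧ (pathGraph R □ pathGraph C).Adj b c ∧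
      (pathGraph R □ pathGraph C).Adj c d ∧ (pathGraph R □ pathGraph C).Adj d a ∧
      a ≠ c ∧ b ≠ d) ↔
    (pathGraph R).Adj a.1 c.1 ∧ (pathGraph C).Adj a.2 c.2 ∧
      ((b = (a.1, c.2) ∧ d = (c.1, a.2)) ∨ (b = (c.1, a.2) ∧ d = (a.1, c.2))) := by
  obtain ⟨⟨a₁, _⟩, ⟨a₂, _⟩⟩ := a
  obtain ⟨⟨b₁, _⟩, ⟨b₂, _⟩⟩ := b
  obtain ⟨⟨c₁, _⟩, ⟨c₂, _⟩⟩ := c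
  obtain ⟨⟨d₁, _⟩, ⟨d₂, _⟩⟩ := d
  simp only [boxProd_adj, pathGraph_adj, Prod.mk.injEq, Fin.mk.injEq, ne_eq]
  constructor
  · rintro ⟨hab, hbc, hcd, hda, hac, hbd⟩
    rcases hab with ⟨hab | hab, hab'⟩ | ⟨hab | hab, hab'⟩ <;>
    rcases hbc with ⟨hbc | hbc, hbc'⟩ | ⟨hbc | hbc, hbc'⟩ <;>
    omega
  · omega

/-- An ordered 4-cycle is a pair of ordered edges, the two projections of the diagonal from the
first to the third vertex, together with a Boolean that chooses the second vertex. -/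
def squareOfEdges {R C : ℕ} (t : OrderedEdges R × OrderedEdges C × Bool) :
    (Fin R × Fin C) × (Fin R × Fin C) × (Fin R × Fin C) × (Fin R × Fin C) :=
  let x := t.1.1
  let y := t.2.1.1
  if t.2.2 then ((x.1, y.1), (x.1, y.2), (x.2, y.2), (x.2, y.1))
  else ((x.1, y.1), (x.2, y.1), (x.2, y.2), (x.1, y.2))

/-- The `R × C` grid graph has `8·(R-1)·(C-1)` ordered 4-cycles, i.e. `(R-1)·(C-1)`
distinct 4-cycles. -/
theorem grid_c4_count (R C : ℕ) (hR : 1 ≤ R) (hC : 1 ≤ C) :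
    Nat.card {q : (Fin R × Fin C) × (Fin R × Fin C) × (Fin R × Fin C) × (Fin R × Fin C) //
      (pathGraph R □ pathGraph C).Adj q.1 q.2.1 ∧
      (pathGraph R □ pathGraph C).Adj q.2.1 q.2.2.1 ∧
      (pathGraph R □ pathGraph C).Adj q.2.2.1 q.2.2.2 ∧
      (pathGraph R □ pathGraph C).Adj q.2.2.2 q.1 ∧
      q.1 ≠ q.2.2.1 ∧ q.2.1 ≠ q.2.2.2} =
    8 * (R - 1) * (C - 1) := by
  simp only [fourCycle_iff]
  have hmem : ∀ t : OrderedEdges R × OrderedEdges C × Bool,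
      let q := squareOfEdges t
      (pathGraph R).Adj q.1.1 q.2.2.1.1 ∧ (pathGraph C).Adj q.1.2 q.2.2.1.2 ∧
        ((q.2.1 = (q.1.1, q.2.2.1.2) ∧ q.2.2.2 = (q.2.2.1.1, q.1.2)) ∨
          (q.2.1 = (q.2.2.1.1, q.1.2) ∧ q.2.2.2 = (q.1.1, q.2.2.1.2))) := by
    rintro ⟨⟨x, hx⟩, ⟨y, hy⟩, _ | _⟩ <;> simp [squareOfEdges, hx, hy]
  rw [← Nat.card_congr (Equiv.ofBijective (fun t => ⟨squareOfEdges t, hmem t⟩) ⟨?_, ?_⟩)]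
  · rw [Nat.card_prod, Nat.card_prod, card_orderedEdges R hR, card_orderedEdges C hC,
      Nat.card_eq_fintype_card, Fintype.card_bool]
    ring
  · rintro ⟨⟨⟨x, x'⟩, hx⟩, ⟨⟨y, y'⟩, hy⟩, o⟩ ⟨⟨⟨z, z'⟩, hz⟩, ⟨⟨w, w'⟩, hw⟩, p⟩ hsq
    -- Adjacent vertices are distinct, so the second vertex determines the orientation.
    have hx' := hx.ne
    have hy' := hy.ne
    cases o <;> cases p <;> simp [squareOfEdges] at hsq hx' hy' ⊢ <;> grind
  · rintro ⟨⟨a, b, c, d⟩, hac, hac', ⟨hb, hd⟩ | ⟨hb, hd⟩⟩ <;> dsimp only at hac hac' hb hd <;>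
      subst hb hd
    · exact ⟨⟨⟨(a.1, c.1), hac⟩, ⟨(a.2, c.2), hac'⟩, true⟩, by simp [squareOfEdges]⟩
    · exact ⟨⟨⟨(a.1, c.1), hac⟩, ⟨(a.2, c.2), hac'⟩, false⟩, by simp [squareOfEdges]⟩
end
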